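/- Let Φ(E) be a holomorphic family of type-A of closed operators on a Hilbert space, defined on a domain Ω ⊆ ℂ symmetric about the real axis with common dense domain D₀, satisfying Φ(conj(E)) ⊆ Φ(E)* for all E ∈ Ω. If the set M = {E ∈ Ω : Φ(E)* = Φ(conj(E))} is nonempty, then M = Ω (Wüst's theorem). -/

import Mathlib

/-- The operator family with fixed domain `D₀` given by the linear maps `T E : D₀ →ₗ[ℂ] H`,
viewed as a family of partially defined operators (a type-A family has constant domain). -/
noncomputable def pmapFamily {H : Type*} [NormedAddCommGroup H] [InnerProductSpace ℂ H]
    (D₀ : Submodule ℂ H) (T : ℂ → (D₀ →ₗ[ℂ] H)) (E : ℂ) : H →ₗ.[ℂ] H :=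
  ⟨D₀, T E⟩

open Filter Topology Set

/-- A strongly holomorphic family of bounded operators is norm continuous. -/
theorem continuousOn_of_strongly_differentiableOn
    {X Y : Type*} [NormedAddCommGroup X] [NormedSpace ℂ X] [CompleteSpace X]
    [NormedAddCommGroup Y] [NormedSpace ℂ Y] {Ω : Set ℂ} (hΩ : IsOpen Ω) {L : ℂ → X →L[ℂ] Y}
    (hL : ∀ x, DifferentiableOn ℂ (fun E => L E x) Ω) : ContinuousOn L Ω := by
  intro a ha
  refine ContinuousAt.continuousWithinAt ?_
  obtain ⟨r, hr, hball⟩ := Metric.nhds_basis_closedBall.mem_iff.1 (hΩ.mem_nhds ha)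
  obtain ⟨C, hC⟩ := banach_steinhaus
    (g := fun E : Metric.closedBall a r => ((E : ℂ) - a)⁻¹ • (L E - L a)) (by
      intro x
      have hcont : ContinuousOn (dslope (fun E => L E x) a) (Metric.closedBall a r) :=
        (continuousOn_dslope (Metric.closedBall_mem_nhds a hr)).2
          ⟨((hL x).mono hball).continuousOn, (hL x).differentiableAt (hΩ.mem_nhds ha)⟩
      obtain ⟨C, hC⟩ := (isCompact_closedBall a r).exists_bound_of_continuousOn hcont
      refine ⟨C, fun E => ?_⟩
      by_cases hE : (E : ℂ) = a
      · simpa [hE] using (norm_nonneg _).trans (hC E E.2)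
      · have := hC E E.2
        rw [dslope_of_ne _ hE, slope_def_module] at this
        simpa using this)
  have hbound : ∀ E ∈ Metric.closedBall a r, ‖L E - L a‖ ≤ C * ‖E - a‖ := by
    intro E hE
    by_cases hne : E = a
    · simp [hne]
    · have hsub : E - a ≠ 0 := sub_ne_zero.2 hne
      have h := hC ⟨E, hE⟩
      rw [norm_smul, norm_inv] at h
      rwa [inv_mul_le_iff₀ (norm_pos_iff.2 hsub), mul_comm] at h
  rw [ContinuousAt, tendsto_iff_norm_sub_tendsto_zero]
  refine squeeze_zero' (Eventually.of_forall fun _ => norm_nonneg _)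
    (eventually_of_mem (Metric.closedBall_mem_nhds a hr) hbound) ?_
  have : Continuous fun E : ℂ => C * ‖E - a‖ := by fun_prop
  simpa using this.tendsto a

theorem norm_le_of_antilipschitz {X Y : Type*} [NormedAddCommGroup X] [NormedSpace ℂ X]
    [NormedAddCommGroup Y] [NormedSpace ℂ Y] {f : X →L[ℂ] Y} {K : NNReal}
    (hf : AntilipschitzWith K f) (x : X) : ‖x‖ ≤ K * ‖f x‖ := by
  simpa only [dist_zero_right, map_zero] using hf.le_mul_dist x 0

/-- In a norm continuous family of operators that are bounded below, over a connected open set,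
surjectivity of one member forces surjectivity of all members. -/
theorem surjective_of_antilipschitz_family
    {X Y : Type*} [NormedAddCommGroup X] [NormedSpace ℂ X] [CompleteSpace X]
    [NormedAddCommGroup Y] [NormedSpace ℂ Y] [CompleteSpace Y]
    {Ω : Set ℂ} (hΩ : IsOpen Ω) (hconn : IsPreconnected Ω) {B : ℂ → X →L[ℂ] Y}
    (hB : ContinuousOn B Ω) (hlow : ∀ E ∈ Ω, ∃ K, AntilipschitzWith K (B E))
    {E₀ : ℂ} (hE₀ : E₀ ∈ Ω) (hsurj : Function.Surjective (B E₀)) :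
    ∀ E ∈ Ω, Function.Surjective (B E) := by
  set U : Set ℂ := Ω ∩ B ⁻¹' range ((↑) : (X ≃L[ℂ] Y) → X →L[ℂ] Y) with hU
  have hmem : ∀ E ∈ Ω, Function.Surjective (B E) → E ∈ U := by
    intro E hE hs
    obtain ⟨K, hK⟩ := hlow E hE
    exact ⟨hE, ContinuousLinearEquiv.ofBijective (B E) (LinearMap.ker_eq_bot.2 hK.injective)
      (LinearMap.range_eq_top.2 hs), ContinuousLinearEquiv.coe_ofBijective _ _ _⟩
  have hUsurj : ∀ E ∈ U, Function.Surjective (B E) := by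
    rintro E ⟨-, e, he⟩
    rw [← he]
    exact e.surjective
  have hsub : Ω ⊆ U := by
    refine hconn.subset_of_closure_inter_subset
      (hB.isOpen_inter_preimage hΩ ContinuousLinearEquiv.isOpen)
      ⟨E₀, hE₀, hmem E₀ hE₀ hsurj⟩ ?_
    rintro a ⟨hacl, ha⟩
    refine hmem a ha fun y => ?_
    obtain ⟨K, hK⟩ := hlow a ha
    have hclosed : IsClosed (range (B a)) := hK.isClosed_range (B a).uniformContinuous
    have hball : ∀ x, ‖x‖ ≤ K * ‖B a x‖ := norm_le_of_antilipschitz hK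
    suffices h : y ∈ closure (range (B a)) by rwa [hclosed.closure_eq] at h
    obtain ⟨u, huU, hua⟩ := mem_closure_iff_seq_limit.1 hacl
    choose w hw using fun n => hUsurj (u n) (huU n) y
    have hδ : Tendsto (fun n => ‖B (u n) - B a‖) atTop (𝓝 0) := by
      rw [← tendsto_iff_norm_sub_tendsto_zero]
      exact (hB.continuousAt (hΩ.mem_nhds ha)).tendsto.comp hua
    have hdiff : ∀ n, ‖B a (w n) - y‖ ≤ ‖B (u n) - B a‖ * ‖w n‖ := by
      intro n
      rw [norm_sub_rev, ← hw n, ← sub_apply]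
      exact ContinuousLinearMap.le_opNorm _ _
    have hwbound : ∀ᶠ n in atTop, ‖w n‖ ≤ 2 * K * ‖y‖ := by
      have hev : ∀ᶠ n in atTop, K * ‖B (u n) - B a‖ < 1 / 2 := by
        have := hδ.const_mul (K : ℝ)
        rw [mul_zero] at this
        exact this.eventually_lt_const (by norm_num)
      filter_upwards [hev] with n hn
      have h1 : ‖B a (w n)‖ ≤ ‖y‖ + ‖B (u n) - B a‖ * ‖w n‖ :=
        (norm_le_norm_add_norm_sub' _ _).trans (by gcongr; exact hdiff n)
      have h2 := (hball (w n)).trans (mul_le_mul_of_nonneg_left h1 K.coe_nonneg)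
      nlinarith [mul_le_mul_of_nonneg_right hn.le (norm_nonneg (w n))]
    have hlim : Tendsto (fun n => B a (w n)) atTop (𝓝 y) := by
      rw [tendsto_iff_norm_sub_tendsto_zero]
      refine squeeze_zero' (Eventually.of_forall fun _ => norm_nonneg _)
        (g := fun n => ‖B (u n) - B a‖ * (2 * K * ‖y‖)) ?_ (by simpa using hδ.mul_const _)
      filter_upwards [hwbound] with n hn
      exact (hdiff n).trans (by gcongr)
    exact mem_closure_of_tendsto hlim (Eventually.of_forall fun n => mem_range_self _)
  exact fun E hE => hUsurj E (hsub hE)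

theorem eq_zero_of_inner_self_add_inner_self_eq_zero {H : Type*} [NormedAddCommGroup H]
    [InnerProductSpace ℂ H] {x y : H} (h : inner ℂ x x + inner ℂ y y = 0) : x = 0 ∧ y = 0 := by
  have h' := congrArg RCLike.re h
  rw [map_add, inner_self_eq_norm_sq, inner_self_eq_norm_sq, map_zero] at h'
  constructor <;> rw [← norm_eq_zero] <;> nlinarith [sq_nonneg ‖x‖, sq_nonneg ‖y‖]

section Block

variable {H : Type*} [NormedAddCommGroup H] [InnerProductSpace ℂ H]
  {X : Type*} [NormedAddCommGroup X] [NormedSpace ℂ X]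

/-- The operator `(u, v) ↦ (j v - A u, j u + A' v)`. For formally adjoint `A`, `A'` its range is the
orthogonal sum of the rotated graph of `A` and the graph of `A'`. -/
noncomputable def graphSum (j A A' : X →L[ℂ] H) : X × X →L[ℂ] WithLp 2 (H × H) :=
  (WithLp.prodContinuousLinearEquiv 2 ℂ H H).symm.toContinuousLinearMap ∘L
    (.inl ℂ H H ∘L (j ∘L .snd ℂ X X - A ∘L .fst ℂ X X) +
      .inr ℂ H H ∘L (j ∘L .fst ℂ X X + A' ∘L .snd ℂ X X))

theorem graphSum_apply (j A A' : X →L[ℂ] H) (u v : X) :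
    graphSum j A A' (u, v) = WithLp.toLp 2 (j v - A u, j u + A' v) := by
  change WithLp.toLp 2 ((j v - A u, (0 : H)) + (0, j u + A' v)) = _
  simp

theorem continuousOn_graphSum (j : X →L[ℂ] H) {A A' : ℂ → X →L[ℂ] H} {Ω : Set ℂ}
    (hA : ContinuousOn A Ω) (hA' : ContinuousOn A' Ω) :
    ContinuousOn (fun E => graphSum j (A E) (A' E)) Ω := by
  unfold graphSum
  fun_prop

theorem norm_graphSum_sq {j A A' : X →L[ℂ] H}
    (h : ∀ u v, inner ℂ (A u) (j v) = inner ℂ (j u) (A' v)) (u v : X) :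
    ‖graphSum j A A' (u, v)‖ ^ 2 = ‖j u‖ ^ 2 + ‖A u‖ ^ 2 + (‖j v‖ ^ 2 + ‖A' v‖ ^ 2) := by
  rw [graphSum_apply, WithLp.prod_norm_sq_eq_of_L2]
  simp only [WithLp.toLp_fst, WithLp.toLp_snd]
  rw [@norm_sub_sq ℂ, @norm_add_sq ℂ, ← h u v, ← inner_conj_symm (j v) (A u), RCLike.conj_re]
  ring

theorem antilipschitz_graphSum {j A A' : X →L[ℂ] H}
    (h : ∀ u v, inner ℂ (A u) (j v) = inner ℂ (j u) (A' v))
    (hA : ∃ K, AntilipschitzWith K (j.prod A)) (hA' : ∃ K, AntilipschitzWith K (j.prod A')) :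
    ∃ K, AntilipschitzWith K (graphSum j A A') := by
  obtain ⟨K, hK⟩ := hA
  obtain ⟨K', hK'⟩ := hA'
  refine ⟨max K K', AddMonoidHomClass.antilipschitz_of_bound _ ?_⟩
  rintro ⟨u, v⟩
  have hsq := norm_graphSum_sq h u v
  have hu : ‖u‖ ≤ K * ‖(j u, A u)‖ := norm_le_of_antilipschitz hK u
  have hv : ‖v‖ ≤ K' * ‖(j v, A' v)‖ := norm_le_of_antilipschitz hK' v
  have hu' : ‖(j u, A u)‖ ≤ ‖graphSum j A A' (u, v)‖ := by
    rw [Prod.norm_mk]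
    refine max_le ?_ ?_ <;> refine le_of_sq_le_sq ?_ (norm_nonneg _) <;> rw [hsq] <;> nlinarith
  have hv' : ‖(j v, A' v)‖ ≤ ‖graphSum j A A' (u, v)‖ := by
    rw [Prod.norm_mk]
    refine max_le ?_ ?_ <;> refine le_of_sq_le_sq ?_ (norm_nonneg _) <;> rw [hsq] <;> nlinarith
  rw [Prod.norm_mk]
  refine max_le (hu.trans ?_) (hv.trans ?_)
  · gcongr; exact le_max_left _ _
  · gcongr; exact le_max_right _ _

variable [CompleteSpace H] {D₀ : Submodule ℂ H} {F F' : D₀ →ₗ[ℂ] H} {S : X ≃ₗ[ℂ] D₀}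
  {j A A' : X →L[ℂ] H}

theorem adjoint_eq_of_surjective_graphSum (hdense : Dense (D₀ : Set H))
    (hle : (⟨D₀, F'⟩ : H →ₗ.[ℂ] H) ≤ (⟨D₀, F⟩ : H →ₗ.[ℂ] H).adjoint)
    (hj : ∀ x, j x = S x) (hA : ∀ x, A x = F (S x)) (hA' : ∀ x, A' x = F' (S x))
    (hsurj : Function.Surjective (graphSum j A A')) :
    (⟨D₀, F⟩ : H →ₗ.[ℂ] H).adjoint = ⟨D₀, F'⟩ := by
  refine (LinearPMap.eq_of_le_of_domain_eq hle (le_antisymm hle.1 fun y hy => ?_)).symm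
  set G : H →ₗ.[ℂ] H := ⟨D₀, F⟩
  have hform := LinearPMap.adjoint_isFormalAdjoint (T := G) hdense
  obtain ⟨⟨u, v⟩, huv⟩ := hsurj (WithLp.toLp 2 (y, G.adjoint ⟨y, hy⟩))
  rw [graphSum_apply] at huv
  have huv' := Prod.mk.inj (WithLp.toLp_injective 2 huv)
  obtain ⟨h1, h2⟩ := huv'
  rw [hj, hA] at h1
  rw [hj, hA'] at h2
  have hvF : G.adjoint ⟨S v, hle.1 (S v).2⟩ = F' (S v) := (hle.2 (x := S v) rfl).symm
  have hy1 := hform ⟨y, hy⟩ (S u)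
  have hv1 := hform ⟨S v, hle.1 (S v).2⟩ (S u)
  rw [hvF] at hv1
  rw [← h2] at hy1
  change inner ℂ _ _ = inner ℂ y (F (S u)) at hy1
  change inner ℂ _ _ = inner ℂ (S v : H) (F (S u)) at hv1
  rw [← h1, inner_add_left, inner_sub_left, hv1] at hy1
  have hsum : inner ℂ (S u : H) (S u : H) + inner ℂ (F (S u)) (F (S u)) = 0 := by
    linear_combination hy1
  rw [(eq_zero_of_inner_self_add_inner_self_eq_zero hsum).2, sub_zero] at h1
  rw [← h1]
  exact (S v).2

theorem surjective_graphSum_of_adjoint_eq [CompleteSpace X] (hdense : Dense (D₀ : Set H))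
    (heq : (⟨D₀, F⟩ : H →ₗ.[ℂ] H).adjoint = ⟨D₀, F'⟩)
    (hj : ∀ x, j x = S x) (hA : ∀ x, A x = F (S x)) (hA' : ∀ x, A' x = F' (S x))
    (hlow : ∃ K, AntilipschitzWith K (graphSum j A A')) :
    Function.Surjective (graphSum j A A') := by
  obtain ⟨K, hK⟩ := hlow
  have hclosed : IsClosed ((graphSum j A A').range : Set (WithLp 2 (H × H))) := by
    exact hK.isClosed_range (graphSum j A A').uniformContinuous
  suffices h : (graphSum j A A').rangeᗮ = ⊥ by
    rw [← Submodule.topologicalClosure_eq_top_iff, hclosed.submodule_topologicalClosure_eq] at h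
    exact LinearMap.range_eq_top.1 h
  rw [Submodule.eq_bot_iff]
  intro w hw
  obtain ⟨p, q⟩ := w
  have horth : ∀ u v, inner ℂ p (j v - A u) + inner ℂ q (j u + A' v) = 0 := by
    intro u v
    have := Submodule.inner_left_of_mem_orthogonal
      (LinearMap.mem_range_self (graphSum j A A').toLinearMap (u, v)) hw
    rwa [ContinuousLinearMap.coe_coe, graphSum_apply, WithLp.prod_inner_apply] at this
  set G : H →ₗ.[ℂ] H := ⟨D₀, F⟩
  have hpq : ∀ x : G.domain, inner ℂ q (x : H) = inner ℂ p (G x) := by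
    intro x
    have := horth (S.symm x) 0
    rw [map_zero, map_zero, hj, hA, LinearEquiv.apply_symm_apply, zero_sub, add_zero,
      inner_neg_right] at this
    change _ = inner ℂ p (F x)
    linear_combination this
  have hp : p ∈ G.adjoint.domain := LinearPMap.mem_adjoint_domain_of_exists _ ⟨q, hpq⟩
  have hq := LinearPMap.adjoint_apply_eq hdense ⟨p, hp⟩ hpq
  have hpD : p ∈ D₀ := by rw [heq] at hp; exact hp
  have hF' : F' ⟨p, hpD⟩ = q := by
    rw [← hq]
    exact (heq.ge.2 (x := ⟨p, hpD⟩) rfl)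
  have := horth 0 (S.symm ⟨p, hpD⟩)
  rw [map_zero, map_zero, hj, hA', LinearEquiv.apply_symm_apply, hF', sub_zero, zero_add] at this
  obtain ⟨hp0, hq0⟩ := eq_zero_of_inner_self_add_inner_self_eq_zero this
  rw [hp0, hq0]
  rfl

end Block

section GraphNorm

variable {H : Type*} [NormedAddCommGroup H] [InnerProductSpace ℂ H]
  {X : Type*} [NormedAddCommGroup X] [NormedSpace ℂ X] [CompleteSpace X]
  {D₀ : Submodule ℂ H} {F : D₀ →ₗ[ℂ] H} {S : X ≃ₗ[ℂ] D₀} {j : X →L[ℂ] H}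

theorem continuous_comp_of_isClosed [CompleteSpace H] (hF : (⟨D₀, F⟩ : H →ₗ.[ℂ] H).IsClosed)
    (hj : ∀ x, j x = S x) : Continuous (F ∘ₗ S.toLinearMap) := by
  refine LinearMap.continuous_of_isClosed_graph _ ?_
  have hcont : Continuous fun x : X × H => (j x.1, x.2) := by fun_prop
  convert hF.preimage hcont using 1
  ext ⟨x, y⟩
  simp only [SetLike.mem_coe, LinearMap.mem_graph_iff, mem_preimage, LinearPMap.mem_graph_iff, hj]
  constructor
  · rintro rfl
    exact ⟨S x, rfl, rfl⟩
  · rintro ⟨z, hz, rfl⟩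
    rw [Subtype.ext hz]
    rfl

theorem antilipschitz_prod_of_isClosed [CompleteSpace H]
    (hF : (⟨D₀, F⟩ : H →ₗ.[ℂ] H).IsClosed)
    (hj : ∀ x, j x = S x) {A : X →L[ℂ] H} (hA : ∀ x, A x = F (S x)) :
    ∃ K, AntilipschitzWith K (j.prod A) := by
  refine (j.prod A).antilipschitz_of_injective_of_isClosed_range ?_ ?_
  · intro x y hxy
    have h : j x = j y := congrArg Prod.fst hxy
    rw [hj, hj] at h
    exact S.injective (Subtype.ext h)
  · suffices h : range (j.prod A) = ((⟨D₀, F⟩ : H →ₗ.[ℂ] H).graph : Set (H × H)) by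
      rw [h]
      exact hF
    ext ⟨x, y⟩
    simp only [mem_range, SetLike.mem_coe, LinearPMap.mem_graph_iff, ContinuousLinearMap.prod_apply,
      hj, hA, Prod.mk.injEq]
    constructor
    · rintro ⟨z, h⟩
      exact ⟨S z, h⟩
    · rintro ⟨z, h⟩
      refine ⟨S.symm z, ?_⟩
      rw [S.apply_symm_apply]
      exact h

end GraphNorm

/-- The projection of the graph of a partially defined operator onto its domain. -/
noncomputable def LinearPMap.graphEquivDomain {H : Type*} [NormedAddCommGroup H]
    [InnerProductSpace ℂ H] (f : H →ₗ.[ℂ] H) : f.graph ≃ₗ[ℂ] f.domain :=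
  LinearEquiv.ofBijective
    ((LinearMap.fst ℂ H H ∘ₗ f.graph.subtype).codRestrict f.domain
      fun x => LinearPMap.mem_domain_of_mem_graph x.2)
    ⟨fun x y h => Subtype.ext (Prod.ext (congrArg Subtype.val h) 
      (f.mem_graph_snd_inj' x.2 y.2 (congrArg Subtype.val h))),
      fun x => ⟨⟨_, f.mem_graph x⟩, rfl⟩⟩

theorem inner_eq_of_le_adjoint {H : Type*} [NormedAddCommGroup H] [InnerProductSpace ℂ H]
    [CompleteSpace H] {D₀ : Submodule ℂ H} (hdense : Dense (D₀ : Set H)) {F F' : D₀ →ₗ[ℂ] H}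
    (hle : (⟨D₀, F'⟩ : H →ₗ.[ℂ] H) ≤ (⟨D₀, F⟩ : H →ₗ.[ℂ] H).adjoint) (u v : D₀) :
    inner ℂ (F u) (v : H) = inner ℂ (u : H) (F' v) := by
  set G : H →ₗ.[ℂ] H := ⟨D₀, F⟩
  have hform := (LinearPMap.adjoint_isFormalAdjoint (T := G) hdense).symm u ⟨v, hle.1 v.2⟩
  rw [← hle.2 (x := v) rfl] at hform
  exact hform

theorem adjoint_family_eq_of_domain_equiv
    {H : Type*} [NormedAddCommGroup H] [InnerProductSpace ℂ H] [CompleteSpace H]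
    {X : Type*} [NormedAddCommGroup X] [NormedSpace ℂ X] [CompleteSpace X]
    {Ω : Set ℂ} (hopen : IsOpen Ω) (hconn : IsPreconnected Ω)
    (hsymm : ∀ E ∈ Ω, (starRingEnd ℂ) E ∈ Ω)
    {D₀ : Submodule ℂ H} (hdense : Dense (D₀ : Set H)) {T : ℂ → (D₀ →ₗ[ℂ] H)}
    (hclosed : ∀ E ∈ Ω, (⟨D₀, T E⟩ : H →ₗ.[ℂ] H).IsClosed)
    (hhol : ∀ u : D₀, DifferentiableOn ℂ (fun E => T E u) Ω)
    (hincl : ∀ E ∈ Ω, (⟨D₀, T ((starRingEnd ℂ) E)⟩ : H →ₗ.[ℂ] H)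
      ≤ (⟨D₀, T E⟩ : H →ₗ.[ℂ] H).adjoint)
    {S : X ≃ₗ[ℂ] D₀} {j : X →L[ℂ] H} (hj : ∀ x, j x = S x) {E₀ : ℂ} (hE₀ : E₀ ∈ Ω)
    (hM₀ : (⟨D₀, T E₀⟩ : H →ₗ.[ℂ] H).adjoint = ⟨D₀, T ((starRingEnd ℂ) E₀)⟩) :
    ∀ E ∈ Ω, (⟨D₀, T E⟩ : H →ₗ.[ℂ] H).adjoint = ⟨D₀, T ((starRingEnd ℂ) E)⟩ := by
  obtain ⟨L, hL⟩ : ∃ L : ℂ → X →L[ℂ] H, ∀ E ∈ Ω, ∀ x, L E x = T E (S x) := by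
    choose! L hL using fun E (hE : E ∈ Ω) => show ∃ A : X →L[ℂ] H, ∀ x, A x = T E (S x) from
      ⟨⟨T E ∘ₗ S.toLinearMap, continuous_comp_of_isClosed (hclosed E hE) hj⟩, fun _ => rfl⟩
    exact ⟨L, hL⟩
  have hLcont : ContinuousOn L Ω := continuousOn_of_strongly_differentiableOn hopen fun x =>
    (hhol (S x)).congr fun E hE => hL E hE x
  have hLcont' : ContinuousOn (fun E => L ((starRingEnd ℂ) E)) Ω :=
    hLcont.comp Complex.continuous_conj.continuousOn hsymm
  have hB : ContinuousOn (fun E => graphSum j (L E) (L ((starRingEnd ℂ) E))) Ω :=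
    continuousOn_graphSum j hLcont hLcont'
  have hlow : ∀ E ∈ Ω, ∃ K, AntilipschitzWith K (graphSum j (L E) (L ((starRingEnd ℂ) E))) := by
    intro E hE
    refine antilipschitz_graphSum (fun u v => ?_)
      (antilipschitz_prod_of_isClosed (hclosed E hE) hj (hL E hE))
      (antilipschitz_prod_of_isClosed (hclosed _ (hsymm E hE)) hj (hL _ (hsymm E hE)))
    rw [hL E hE, hL _ (hsymm E hE), hj, hj]
    exact inner_eq_of_le_adjoint hdense (hincl E hE) (S u) (S v)
  intro E hE
  refine adjoint_eq_of_surjective_graphSum hdense (hincl E hE) hj (hL E hE) (hL _ (hsymm E hE)) ?_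
  exact surjective_of_antilipschitz_family hopen hconn hB hlow hE₀
    (surjective_graphSum_of_adjoint_eq hdense hM₀ hj (hL E₀ hE₀) (hL _ (hsymm E₀ hE₀))
      (hlow E₀ hE₀)) E hE

/-- Wüst's theorem: let `Φ(E) = pmapFamily D₀ T E` be a holomorphic family of type-A of
closed operators on a domain `Ω ⊆ ℂ` symmetric about the real axis, with common dense
domain `D₀` and `Φ(conj E) ⊆ Φ(E)*` for all `E ∈ Ω`.  If the set
`M = {E ∈ Ω : Φ(E)* = Φ(conj E)}` is nonempty, then `M = Ω`. -/
theorem wust_selfAdjoint_family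
    {H : Type*} [NormedAddCommGroup H] [InnerProductSpace ℂ H] [CompleteSpace H]
    (Ω : Set ℂ) (hopen : IsOpen Ω) (hconn : IsConnected Ω)
    (hsymm : ∀ E ∈ Ω, (starRingEnd ℂ) E ∈ Ω)
    (D₀ : Submodule ℂ H) (hdense : Dense (D₀ : Set H))
    (T : ℂ → (D₀ →ₗ[ℂ] H))
    (hclosed : ∀ E ∈ Ω, (pmapFamily D₀ T E).IsClosed)
    (hhol : ∀ u : D₀, DifferentiableOn ℂ (fun E => T E u) Ω)
    (hincl : ∀ E ∈ Ω, pmapFamily D₀ T ((starRingEnd ℂ) E) ≤ (pmapFamily D₀ T E).adjoint)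
    (hne : {E ∈ Ω | (pmapFamily D₀ T E).adjoint
        = pmapFamily D₀ T ((starRingEnd ℂ) E)}.Nonempty) :
    {E ∈ Ω | (pmapFamily D₀ T E).adjoint = pmapFamily D₀ T ((starRingEnd ℂ) E)} = Ω := by
  obtain ⟨E₀, hE₀, hM₀⟩ := hne
  let X := (pmapFamily D₀ T E₀).graph
  have : CompleteSpace X := (hclosed E₀ hE₀).completeSpace_coe
  let S : X ≃ₗ[ℂ] D₀ := (pmapFamily D₀ T E₀).graphEquivDomain
  let j : X →L[ℂ] H := ContinuousLinearMap.fst ℂ H H ∘L X.subtypeL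
  have hj : ∀ x, j x = S x := fun _ => rfl
  refine Subset.antisymm (fun E hE => hE.1) fun E hE => ⟨hE, ?_⟩
  exact adjoint_family_eq_of_domain_equiv hopen hconn.isPreconnected hsymm hdense hclosed hhol
    hincl hj hE₀ hM₀ E hE
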